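/- Let s be a positive integer and let p be one of the primes 2, 3, 5, 7. Then the p-divisible set J(s|p) = {n ≥ 0 : p divides the numerator of H(s;n) in lowest terms} is finite. -/

import Mathlib

open Classical in
/-- Multiple harmonic sum `H(s₁,…,s_l; n) = ∑_{1 ≤ k₁ < ⋯ < k_l ≤ n} k₁^{-s₁} ⋯ k_l^{-s_l}`,
encoded via strictly increasing tuples of indices in `{1,…,n}` (an empty sum is `0`,
and `mhs [] n = 1`). -/
noncomputable def mhs (s : List ℕ) (n : ℕ) : ℚ :=
  ∑ k ∈ Finset.univ.filter
      (fun k : Fin s.length → Fin (n + 1) =>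
        StrictMono k ∧ ∀ i, 1 ≤ (k i : ℕ)),
    ∏ i, 1 / (((k i : ℕ) : ℚ) ^ s.get i)

open Classical in
/-- `p`-restricted multiple harmonic sum `H*(s; n)`: same sum with all indices
not divisible by `p`. -/
noncomputable def mhsStar (p : ℕ) (s : List ℕ) (n : ℕ) : ℚ :=
  ∑ k ∈ Finset.univ.filter
      (fun k : Fin s.length → Fin (n + 1) =>
        StrictMono k ∧ ∀ i, 1 ≤ (k i : ℕ) ∧ ¬ p ∣ (k i : ℕ)),
    ∏ i, 1 / (((k i : ℕ) : ℚ) ^ s.get i)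

/-!
Since `H(s; n) = H(s; ⌊n / p⌋) / p ^ s + H*(s; n)` with `H*(s; n)` a `p`-adic integer, `n ∈ J(s|p)`
forces `p ^ s` to divide `H(s; ⌊n / p⌋)`, and likewise for every further truncation of the base `p`
expansion of `n`. Hence `J(s|p)` is finite as soon as, for some number `d` of digits, no `n` with
`d` digits has `p ^ s ∣ H(s; n)`.

For large `s` one digit is enough. Small `n` are excluded because `p ^ s` exceeds the numerator over
a common denominator, and others by Fermat's theorem modulo `p`. For `n = p - 1`, Euler's theorem
turns `k ^ (-s)` into `k ^ e` with `e = φ(p ^ s) - s`. The power sum over `k < p` of an odd exponent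
reduces to that of the preceding even exponent by the reflection `k ↦ p - k`, expanded to second
order in `p`; for an even exponent, doubling the variable gives Voronoi's congruence, which bounds
the `p`-adic valuation as long as the sums of odd powers of the odd `k < p` do not vanish modulo
`p`. The remaining pairs `(3, 1)`, `(5, 1)`, `(7, 1)` and `(7, 2)` for `(p, s)` are settled by a
search through the tree of digit expansions, with harmonic sums computed modulo powers of `p`.
-/

open Finset

section PadicIdeal

/-- The fractional ideal `p ^ K ℤ₍ₚ₎` of `ℚ`: congruences modulo `p ^ K` between rationals are
memberships of differences in it. -/
def padicIdeal (p : ℕ) [Fact p.Prime] (K : ℕ) : AddSubgroup ℚ where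
  carrier := {x | padicNorm p x ≤ (p : ℚ) ^ (-(K : ℤ))}
  zero_mem' := by
    rw [Set.mem_ofPred_eq, padicNorm.zero]
    positivity
  add_mem' hx hy := padicNorm.nonarchimedean.trans (max_le hx hy)
  neg_mem' hx := by rwa [Set.mem_ofPred_eq, padicNorm.neg]

variable {p : ℕ} [Fact p.Prime] {K L : ℕ} {x y : ℚ}

theorem mem_padicIdeal : x ∈ padicIdeal p K ↔ padicNorm p x ≤ (p : ℚ) ^ (-(K : ℤ)) :=
  Iff.rfl

theorem padicIdeal_antitone : Antitone (padicIdeal p) := by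
  intro K L hKL x hx
  have hp : (1 : ℚ) ≤ p := mod_cast (Fact.out : p.Prime).one_le
  exact (mem_padicIdeal.1 hx).trans (zpow_le_zpow_right₀ hp (by omega))

theorem intCast_mem_padicIdeal {a : ℤ} : (a : ℚ) ∈ padicIdeal p K ↔ (p : ℤ) ^ K ∣ a := by
  rw [mem_padicIdeal, ← padicNorm.dvd_iff_norm_le, Nat.cast_pow]

theorem natCast_mem_padicIdeal {a : ℕ} : (a : ℚ) ∈ padicIdeal p K ↔ p ^ K ∣ a := by
  rw [← Int.cast_natCast a, intCast_mem_padicIdeal]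
  exact_mod_cast Iff.rfl

theorem div_pow_mem_padicIdeal : x / (p : ℚ) ^ L ∈ padicIdeal p K ↔ x ∈ padicIdeal p (K + L) := by
  have hp : (0 : ℚ) < p := mod_cast (Fact.out : p.Prime).pos
  rw [mem_padicIdeal, mem_padicIdeal, padicNorm.div, IsAbsoluteValue.abv_pow (padicNorm p),
    padicNorm.padicNorm_p_of_prime, div_le_iff₀ (by positivity), Nat.cast_add, neg_add,
    zpow_add₀ hp.ne', inv_pow, zpow_neg _ (L : ℤ), zpow_natCast]

theorem mul_mem_padicIdeal (hx : x ∈ padicIdeal p K) (hy : y ∈ padicIdeal p 0) :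
    x * y ∈ padicIdeal p K := by
  rw [mem_padicIdeal, padicNorm.mul]
  exact (mul_le_of_le_one_right (padicNorm.nonneg _) (by simpa [mem_padicIdeal] using hy)).trans hx

theorem inv_natCast_mem_padicIdeal_zero {k : ℕ} (hk : ¬ p ∣ k) : (k : ℚ)⁻¹ ∈ padicIdeal p 0 := by
  rw [mem_padicIdeal, inv_eq_one_div, padicNorm.div, (padicNorm.nat_eq_one_iff k).2 hk]
  simp

theorem mem_padicIdeal_one_of_dvd_num (h : (p : ℤ) ∣ x.num) : x ∈ padicIdeal p 1 := by
  have hden : ¬ p ∣ x.den := fun hd =>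
    (Fact.out : p.Prime).not_dvd_one <| x.reduced ▸ Nat.dvd_gcd (Int.natCast_dvd.1 h) hd
  rw [← x.num_div_den, div_eq_mul_inv]
  exact mul_mem_padicIdeal (intCast_mem_padicIdeal.2 (by simpa using h))
    (inv_natCast_mem_padicIdeal_zero hden)

end PadicIdeal

section HarmonicSum

/-- The harmonic sum `H(s; n)`, indexed like Mathlib's `harmonic`. -/
def harmonicSum (s n : ℕ) : ℚ :=
  ∑ k ∈ range n, (((k + 1 : ℕ) : ℚ) ^ s)⁻¹

/-- The restricted harmonic sum `H*(s; n)`, over the indices prime to `p`. -/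
def restrictedHarmonicSum (p s n : ℕ) : ℚ :=
  ∑ k ∈ range n with ¬ p ∣ k + 1, (((k + 1 : ℕ) : ℚ) ^ s)⁻¹

/-- The power sum `1 ^ e + 2 ^ e + ⋯ + n ^ e`. -/
def powerSum (e n : ℕ) : ℤ :=
  ∑ k ∈ range n, ((k + 1 : ℕ) : ℤ) ^ e

/-- The `p`-divisible set `J(s|p)`. -/
def divisibleSet (p s : ℕ) : Set ℕ :=
  {n | (p : ℤ) ∣ (mhs [s] n).num}

theorem mhs_singleton (s n : ℕ) : mhs [s] n = harmonicSum s n := by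
  have hmono (k : Fin 1 → Fin (n + 1)) : StrictMono k := Subsingleton.strictMono k
  simp only [mhs, hmono, true_and, sum_filter, List.length_singleton]
  rw [← (Equiv.funUnique (Fin 1) (Fin (n + 1))).symm.sum_comp, Fin.sum_univ_succ]
  simp [harmonicSum, ← Fin.sum_univ_eq_sum_range]

theorem harmonicSum_eq_div_add {p : ℕ} (hp : 0 < p) (s n : ℕ) :
    harmonicSum s n = harmonicSum s (n / p) / (p : ℚ) ^ s + restrictedHarmonicSum p s n := by
  induction n with
  | zero => simp [harmonicSum, restrictedHarmonicSum]
  | succ n ih =>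
    rw [harmonicSum, sum_range_succ, ← harmonicSum, ih, restrictedHarmonicSum,
      restrictedHarmonicSum, range_add_one, filter_insert, Nat.succ_div]
    split_ifs with h
    · obtain ⟨q, hq⟩ := h
      have hdiv : n / p + 1 = q := by
        rw [← Nat.succ_div_of_dvd ⟨q, hq⟩, hq, Nat.mul_div_cancel_left _ hp]
      rw [harmonicSum, harmonicSum, sum_range_succ, hdiv, hq, add_div, Nat.cast_mul, mul_pow,
        mul_inv, add_right_comm, div_eq_inv_mul (_ ⁻¹)]
    · rw [sum_insert (by simp), add_zero]
      ring

variable {p : ℕ} [Fact p.Prime] {s K : ℕ}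

theorem harmonicSum_eq_restrictedHarmonicSum {n : ℕ} (hn : n < p) :
    harmonicSum s n = restrictedHarmonicSum p s n := by
  rw [harmonicSum_eq_div_add (Fact.out : p.Prime).pos, Nat.div_eq_of_lt hn]
  simp [harmonicSum]

theorem inv_pow_mem_padicIdeal_zero {k : ℕ} (hk : ¬ p ∣ k) :
    ((k : ℚ) ^ s)⁻¹ ∈ padicIdeal p 0 := by
  rw [← Nat.cast_pow]
  exact inv_natCast_mem_padicIdeal_zero fun h => hk ((Fact.out : p.Prime).dvd_of_dvd_pow h)

theorem restrictedHarmonicSum_mem_padicIdeal_zero (s n : ℕ) :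
    restrictedHarmonicSum p s n ∈ padicIdeal p 0 :=
  sum_mem fun _ hk => inv_pow_mem_padicIdeal_zero (mem_filter.1 hk).2

theorem harmonicSum_div_mem_padicIdeal {n : ℕ} (h : harmonicSum s n ∈ padicIdeal p 0) :
    harmonicSum s (n / p) ∈ padicIdeal p s := by
  rw [harmonicSum_eq_div_add (Fact.out : p.Prime).pos] at h
  simpa only [zero_add, div_pow_mem_padicIdeal] using
    (add_mem_cancel_right (restrictedHarmonicSum_mem_padicIdeal_zero s n)).1 h

theorem inv_pow_sub_pow_mem_padicIdeal {e k : ℕ} (he : (p - 1) * p ^ (K - 1) ∣ e + s) (hK : 0 < K)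
    (hk : ¬ p ∣ k) : ((k : ℚ) ^ s)⁻¹ - (k : ℚ) ^ e ∈ padicIdeal p K := by
  have hp : p.Prime := Fact.out
  have euler : (k ^ (e + s) : ℤ) ≡ 1 [ZMOD (p : ℤ) ^ K] := by
    have htotient : (k ^ (p ^ K).totient : ℤ) ≡ 1 [ZMOD (p : ℤ) ^ K] :=
      mod_cast Nat.ModEq.pow_totient ((hp.coprime_iff_not_dvd.2 hk).pow_left K).symm
    obtain ⟨t, ht⟩ := he
    rw [mul_comm (p - 1), ← Nat.totient_prime_pow hp hK] at ht
    rw [ht, pow_mul]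
    simpa only [one_pow] using htotient.pow t
  have hk0 : (k : ℚ) ≠ 0 := mod_cast fun h => hk (h ▸ dvd_zero p)
  have hfactor : ((k : ℚ) ^ s)⁻¹ - (k : ℚ) ^ e =
      ((1 - k ^ (e + s) : ℤ) : ℚ) * ((k : ℚ) ^ s)⁻¹ := by
    push_cast
    rw [pow_add]
    field_simp
  rw [hfactor]
  exact mul_mem_padicIdeal (intCast_mem_padicIdeal.2 euler.dvd) (inv_pow_mem_padicIdeal_zero hk)

theorem restrictedHarmonicSum_sub_powerSum_mem_padicIdeal {e : ℕ}
    (he : (p - 1) * p ^ (K - 1) ∣ e + s) (hK : 0 < K) (hKe : K ≤ e) (n : ℕ) :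
    restrictedHarmonicSum p s n - powerSum e n ∈ padicIdeal p K := by
  rw [restrictedHarmonicSum, sum_filter, powerSum, Int.cast_sum, ← sum_sub_distrib]
  refine sum_mem fun k _ => ?_
  rw [Int.cast_pow, Int.cast_natCast]
  split_ifs with hk
  · rw [zero_sub, neg_mem_iff, ← Nat.cast_pow, natCast_mem_padicIdeal]
    exact (pow_dvd_pow_of_dvd hk K).trans (pow_dvd_pow _ hKe)
  · exact inv_pow_sub_pow_mem_padicIdeal he hK hk

theorem add_le_sub_one_mul_pow {p : ℕ} (hp : 3 ≤ p) {s K : ℕ} (hs : 0 < s) (hsK : s ≤ K) :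
    K + s ≤ (p - 1) * p ^ (K - 1) := by
  have h2 : K ≤ 3 ^ (K - 1) := by
    have := Nat.lt_pow_self (n := K - 1) (show 1 < 3 by norm_num)
    omega
  calc K + s ≤ 2 * K := by omega
    _ ≤ 2 * 3 ^ (K - 1) := by omega
    _ ≤ (p - 1) * p ^ (K - 1) := by gcongr; omega

end HarmonicSum

section Criterion

variable {p : ℕ} [Fact p.Prime] {s : ℕ}

theorem finite_divisibleSet_of_forall_length_digits_eq (d : ℕ)
    (h : ∀ n, (p.digits n).length = d → harmonicSum s n ∉ padicIdeal p s) :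
    (divisibleSet p s).Finite := by
  have hp1 : 1 < p := (Fact.out : p.Prime).one_lt
  have hlength : ∀ n, harmonicSum s n ∈ padicIdeal p s → (p.digits n).length < d := by
    intro n
    induction n using Nat.strong_induction_on with
    | h n ih =>
      intro hn
      rcases Nat.eq_zero_or_pos n with rfl | hpos
      · simpa [Nat.pos_iff_ne_zero] using fun hd : d = 0 => h 0 (by simp [hd]) hn
      · have hdigits := ih (n / p) (Nat.div_lt_self hpos hp1)
          (harmonicSum_div_mem_padicIdeal (padicIdeal_antitone s.zero_le hn))
        have hne : (p.digits n).length ≠ d := fun hd => h n hd hn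
        rw [Nat.digits_def' hp1 hpos, List.length_cons] at hne ⊢
        omega
  refine (Set.finite_lt_nat (p ^ (d + 1))).subset fun n hn => ?_
  have hn1 : harmonicSum s n ∈ padicIdeal p 1 :=
    mem_padicIdeal_one_of_dvd_num (mhs_singleton s n ▸ hn)
  have hdiv := hlength _ (harmonicSum_div_mem_padicIdeal (padicIdeal_antitone zero_le_one hn1))
  refine (Nat.lt_base_pow_length_digits hp1).trans_le (Nat.pow_le_pow_right hp1.le ?_)
  rcases Nat.eq_zero_or_pos n with rfl | hpos
  · simp
  · rw [Nat.digits_def' hp1 hpos, List.length_cons]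
    omega

theorem finite_divisibleSet_of_forall_lt_prime
    (h : ∀ n, 0 < n → n < p → harmonicSum s n ∉ padicIdeal p s) :
    (divisibleSet p s).Finite := by
  refine finite_divisibleSet_of_forall_length_digits_eq 1 fun n hn => h n ?_ ?_
  · rw [Nat.pos_iff_ne_zero]
    rintro rfl
    simp at hn
  · simpa [hn] using Nat.lt_base_pow_length_digits (m := n) (Fact.out : p.Prime).one_lt

end Criterion

section PowerSum

theorem two_mul_powerSum (e n : ℕ) : 2 * powerSum e n =
    ∑ k ∈ range n, (((k + 1 : ℕ) : ℤ) ^ e + (-((k + 1 : ℕ) : ℤ) + (n + 1 : ℕ)) ^ e) := by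
  rw [sum_add_distrib, two_mul, ← powerSum, add_right_inj, powerSum, ← sum_range_reflect]
  refine sum_congr rfl fun k hk => ?_
  have := mem_range.1 hk
  congr 1
  omega

/-- The sum `1 ^ r + 3 ^ r + ⋯ + (2h - 1) ^ r` over the first `h` odd numbers. -/
def oddPowerSum (r h : ℕ) : ℤ :=
  ∑ i ∈ range h, (2 * i + 1 : ℤ) ^ r

-- The doubles `2k` with `k > h` exceed the odd numbers below `2h + 1` by exactly `2h + 1`.
theorem two_pow_sub_one_mul_powerSum (m h : ℕ) :
    (2 ^ m - 1) * powerSum m (2 * h) =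
      ∑ i ∈ range h, ((2 * i + 1 + (2 * h + 1 : ℕ) : ℤ) ^ m - (2 * i + 1) ^ m) := by
  have parity (h : ℕ) : powerSum m (2 * h) =
      ∑ i ∈ range h, (2 * i + 1 : ℤ) ^ m + ∑ i ∈ range h, (2 * i + 2 : ℤ) ^ m := by
    induction h with
    | zero => simp [powerSum]
    | succ h ih =>
      rw [powerSum, mul_add_one, sum_range_succ, sum_range_succ, ← powerSum, ih, sum_range_succ,
        sum_range_succ]
      push_cast
      ring
  have double : 2 ^ m * powerSum m (2 * h) =
      ∑ i ∈ range h, (2 * i + 2 : ℤ) ^ m +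
        ∑ i ∈ range h, (2 * i + 1 + (2 * h + 1 : ℕ) : ℤ) ^ m := by
    rw [powerSum, mul_sum, two_mul, sum_range_add]
    congr 1 <;> refine sum_congr rfl fun i _ => ?_ <;> rw [← mul_pow] <;> push_cast <;> ring
  rw [sub_one_mul, double, parity, sum_sub_distrib]
  ring

variable {p : ℕ} [Fact p.Prime]

theorem one_add_mul_four_le_pow {p : ℕ} (hp : 5 ≤ p) (e : ℕ) : 1 + e * 4 ≤ p ^ e := by
  calc 1 + e * 4 ≤ (1 + 4) ^ e := by
        simpa using one_add_le_pow_of_two_add_nonneg (a := (4 : ℕ)) (by simp) e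
    _ ≤ p ^ e := by gcongr

theorem pow_dvd_succ_mul_self_iff {e n : ℕ} (he : 0 < e) :
    p ^ e ∣ (n + 1) * n ↔ p ^ e ∣ n + 1 ∨ p ^ e ∣ n :=
  (Nat.coprime_self_add_left.2 (by simp)).isPrimePow_dvd_mul
    ((Fact.out : p.Prime).isPrimePow.pow he.ne')

theorem le_of_pow_dvd_add_three_mul_add_two (hp : 5 ≤ p) {e j : ℕ}
    (h : p ^ e ∣ (j + 3) * (j + 2)) : e ≤ j := by
  rcases Nat.eq_zero_or_pos e with rfl | he
  · exact j.zero_le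
  have hle : p ^ e ≤ j + 3 := by
    rcases (pow_dvd_succ_mul_self_iff he).1 h with h | h
    · exact Nat.le_of_dvd (by omega) h
    · exact (Nat.le_of_dvd (by omega) h).trans (by omega)
  have := one_add_mul_four_le_pow hp e
  omega

theorem pow_add_three_dvd_choose_mul_pow (hp : 5 ≤ p) {d n : ℕ}
    (hd : p ^ d ∣ (n + 2) * (n + 1)) (j : ℕ) :
    p ^ (d + 3) ∣ (n + 2).choose (j + 3) * p ^ (j + 3) := by
  have absorb : (n + 2) * (n + 1) * n.choose (j + 1) =
      (j + 3) * (j + 2) * (n + 2).choose (j + 3) := by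
    have h1 := Nat.add_one_mul_choose_eq (n + 1) (j + 2)
    have h2 := Nat.add_one_mul_choose_eq n (j + 1)
    linear_combination (n + 2) * h2 + (j + 2) * h1
  obtain ⟨e, m, hm, hem⟩ := Nat.exists_eq_pow_mul_and_not_dvd (n := (j + 3) * (j + 2))
    (by positivity) p (Fact.out : p.Prime).ne_one
  have hej : e ≤ j := le_of_pow_dvd_add_three_mul_add_two hp (hem ▸ dvd_mul_right _ _)
  have hprod : m * ((n + 2).choose (j + 3) * p ^ (j + 3)) =
      (n + 2) * (n + 1) * n.choose (j + 1) * p ^ (j - e + 3) := by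
    have hpow : p ^ (j + 3) = p ^ e * p ^ (j - e + 3) := by
      rw [← pow_add]
      congr 1
      omega
    rw [absorb, hem, hpow]
    ring
  have hcop : (p ^ (d + 3)).Coprime m :=
    ((Fact.out : p.Prime).coprime_iff_not_dvd.2 hm).pow_left _
  refine hcop.dvd_of_dvd_mul_left ?_
  rw [hprod, pow_add]
  exact mul_dvd_mul (hd.mul_right _) (pow_dvd_pow _ (by omega))

theorem pow_dvd_choose_two (hp : 5 ≤ p) {d n : ℕ} (hd : p ^ d ∣ (n + 2) * (n + 1)) :
    p ^ d ∣ (n + 2).choose 2 := by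
  have hcop : (p ^ d).Coprime 2 :=
    (((Nat.coprime_primes Fact.out Nat.prime_two).2 (by omega))).pow_left d
  refine hcop.dvd_of_dvd_mul_left ?_
  have h := Nat.add_one_mul_choose_eq (n + 1) 1
  rw [Nat.choose_one_right] at h
  rwa [mul_comm 2, ← h]

theorem add_pow_modEq_second_order (hp : 5 ≤ p) {d n : ℕ} (hd : p ^ d ∣ (n + 2) * (n + 1))
    (x : ℤ) : (x + p) ^ (n + 2) ≡
      x ^ (n + 2) + (n + 2) * p * x ^ (n + 1) + (n + 2).choose 2 * p ^ 2 * x ^ n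
      [ZMOD (p : ℤ) ^ (d + 3)] := by
  have expand : (x + p) ^ (n + 2) =
      ∑ j ∈ range n, ((n + 2).choose (j + 3) * p ^ (j + 3) : ℤ) * x ^ (n + 2 - (j + 3)) +
        (x ^ (n + 2) + (n + 2) * p * x ^ (n + 1) + (n + 2).choose 2 * p ^ 2 * x ^ n) := by
    rw [add_comm x, add_pow, sum_range_succ', sum_range_succ', sum_range_succ', add_assoc,
      add_assoc]
    congr 1
    · exact sum_congr rfl fun j _ => by ring
    · simp
      ring
  refine (Int.modEq_iff_dvd.2 ?_).symm
  rw [expand, add_sub_cancel_right]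
  exact dvd_sum fun j _ => Dvd.dvd.mul_right
    (mod_cast pow_add_three_dvd_choose_mul_pow hp hd j) _

theorem add_pow_modEq_first_order (hp : 5 ≤ p) {d n : ℕ} (hd : p ^ d ∣ n + 2) (x : ℤ) :
    (x + p) ^ (n + 2) ≡ x ^ (n + 2) + (n + 2) * p * x ^ (n + 1) [ZMOD (p : ℤ) ^ (d + 2)] := by
  have hd' : p ^ d ∣ (n + 2) * (n + 1) := hd.mul_right _
  have hquad : (n + 2).choose 2 * p ^ 2 * x ^ n ≡ 0 [ZMOD (p : ℤ) ^ (d + 2)] := by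
    rw [Int.modEq_zero_iff_dvd, pow_add]
    exact (mul_dvd_mul (mod_cast pow_dvd_choose_two hp hd') dvd_rfl).mul_right _
  simpa using ((add_pow_modEq_second_order hp hd' x).of_dvd (pow_dvd_pow (p : ℤ)
    (by omega : d + 2 ≤ d + 3))).trans (hquad.add_left _)

theorem two_mul_powerSum_prime_sub_one (e : ℕ) : 2 * powerSum e (p - 1) =
    ∑ k ∈ range (p - 1), (((k + 1 : ℕ) : ℤ) ^ e + (-((k + 1 : ℕ) : ℤ) + p) ^ e) := by
  rw [two_mul_powerSum, Nat.sub_add_cancel (Fact.out : p.Prime).one_le]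

theorem dvd_powerSum_of_odd (hp : p ≠ 2) {n : ℕ} (hn : Odd n) : (p : ℤ) ∣ powerSum n (p - 1) := by
  have h2 : IsCoprime (p : ℤ) 2 := by
    exact_mod_cast Nat.isCoprime_iff_coprime.2 ((Nat.coprime_primes Fact.out Nat.prime_two).2 hp)
  refine h2.dvd_of_dvd_mul_left ?_
  rw [two_mul_powerSum_prime_sub_one]
  refine dvd_sum fun k _ => ?_
  simpa only [add_neg_cancel_left] using
    hn.add_dvd_pow_add_pow ((k + 1 : ℕ) : ℤ) (-((k + 1 : ℕ) : ℤ) + p)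

theorem two_mul_powerSum_modEq (hp : 5 ≤ p) {d n : ℕ} (hn : Odd n)
    (hd : p ^ d ∣ (n + 2) * (n + 1)) :
    2 * powerSum (n + 2) (p - 1) ≡ (n + 2) * p * powerSum (n + 1) (p - 1)
      [ZMOD (p : ℤ) ^ (d + 3)] := by
  have hquad : (n + 2).choose 2 * p ^ 2 * powerSum n (p - 1) ≡ 0 [ZMOD (p : ℤ) ^ (d + 3)] := by
    rw [Int.modEq_zero_iff_dvd, pow_add, pow_succ _ 2, ← mul_assoc]
    exact mul_dvd_mul (mul_dvd_mul (mod_cast pow_dvd_choose_two hp hd) dvd_rfl)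
      (dvd_powerSum_of_odd (by omega) hn)
  have hodd2 : Odd (n + 2) := by simpa [parity_simps] using hn
  have heven : Even (n + 1) := hn.add_one
  rw [two_mul_powerSum_prime_sub_one]
  calc ∑ k ∈ range (p - 1), (((k + 1 : ℕ) : ℤ) ^ (n + 2) + (-((k + 1 : ℕ) : ℤ) + p) ^ (n + 2))
      ≡ ∑ k ∈ range (p - 1), ((n + 2) * p * ((k + 1 : ℕ) : ℤ) ^ (n + 1) -
          (n + 2).choose 2 * p ^ 2 * ((k + 1 : ℕ) : ℤ) ^ n) [ZMOD (p : ℤ) ^ (d + 3)] := by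
        refine Int.ModEq.sum fun k _ => ?_
        convert (add_pow_modEq_second_order hp hd (-((k + 1 : ℕ) : ℤ))).add_left
          (((k + 1 : ℕ) : ℤ) ^ (n + 2)) using 1
        rw [hodd2.neg_pow, heven.neg_pow, hn.neg_pow]
        ring
    _ = (n + 2) * p * powerSum (n + 1) (p - 1) -
          (n + 2).choose 2 * p ^ 2 * powerSum n (p - 1) := by
        rw [sum_sub_distrib, ← mul_sum, ← mul_sum, powerSum, powerSum]
    _ ≡ (n + 2) * p * powerSum (n + 1) (p - 1) [ZMOD (p : ℤ) ^ (d + 3)] := by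
        simpa only [neg_zero, add_zero, ← sub_eq_add_neg] using
          hquad.neg.add_left ((n + 2) * p * powerSum (n + 1) (p - 1))

theorem pow_dvd_of_pow_add_dvd_pow_mul {a b u : ℕ} (hu : ¬ p ∣ u) {x : ℤ}
    (h : (p : ℤ) ^ (a + b) ∣ (p ^ a * u : ℕ) * x) : (p : ℤ) ^ b ∣ x := by
  have hp : (p : ℤ) ≠ 0 := mod_cast (Fact.out : p.Prime).ne_zero
  have hcop : IsCoprime ((p : ℤ) ^ b) u :=
    (Nat.isCoprime_iff_coprime.2 ((Fact.out : p.Prime).coprime_iff_not_dvd.2 hu)).pow_left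
  rw [pow_add, Nat.cast_mul, Nat.cast_pow, mul_assoc] at h
  exact hcop.dvd_of_dvd_mul_left ((mul_dvd_mul_iff_left (pow_ne_zero a hp)).1 h)

theorem two_pow_sub_one_mul_powerSum_modEq (hp : 5 ≤ p) {d n : ℕ} (hd : p ^ d ∣ n + 2) :
    (2 ^ (n + 2) - 1) * powerSum (n + 2) (p - 1) ≡
      (n + 2) * p * oddPowerSum (n + 1) ((p - 1) / 2) [ZMOD (p : ℤ) ^ (d + 2)] := by
  have heven : Even (p - 1) := (Fact.out : p.Prime).even_sub_one (by omega)
  have hhalf : 2 * ((p - 1) / 2) = p - 1 := Nat.two_mul_div_two_of_even heven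
  have hsum := two_pow_sub_one_mul_powerSum (n + 2) ((p - 1) / 2)
  rw [hhalf, Nat.sub_add_cancel (by omega)] at hsum
  rw [hsum, oddPowerSum, mul_sum]
  refine Int.ModEq.sum fun i _ => ?_
  simpa only [add_sub_cancel_left] using
    (add_pow_modEq_first_order hp hd (2 * i + 1)).sub_right ((2 * i + 1) ^ (n + 2))

theorem natCast_zmod_ne_zero {p k : ℕ} (hk : 0 < k) (hkp : k < p) : (k : ZMod p) ≠ 0 :=
  mt (ZMod.natCast_eq_zero_iff k p).1 (Nat.not_dvd_of_pos_of_lt hk hkp)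

theorem sum_pow_eq_sum_pow_mod {ι : Type*} {t : Finset ι} {f : ι → ZMod p}
    (hf : ∀ i ∈ t, f i ≠ 0) (r : ℕ) : ∑ i ∈ t, f i ^ r = ∑ i ∈ t, f i ^ (r % (p - 1)) :=
  sum_congr rfl fun i hi => pow_eq_pow_mod r (ZMod.pow_card_sub_one_eq_one (hf i hi))

theorem not_dvd_powerSum_of_dvd {m : ℕ} (hm : p - 1 ∣ m) : ¬ (p : ℤ) ∣ powerSum m (p - 1) := by
  have hp : 1 < p := (Fact.out : p.Prime).one_lt
  have hne : ∀ k ∈ range (p - 1), ((k + 1 : ℕ) : ZMod p) ≠ 0 := fun k hk =>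
    natCast_zmod_ne_zero k.succ_pos (Nat.add_lt_of_lt_sub (mem_range.1 hk))
  have hsum : ∑ k ∈ range (p - 1), ((k + 1 : ℕ) : ZMod p) ^ m = (p - 1 : ℕ) := by
    rw [sum_pow_eq_sum_pow_mod hne, Nat.mod_eq_zero_of_dvd hm]
    simp only [pow_zero, sum_const, card_range, nsmul_one]
  rw [← ZMod.intCast_zmod_eq_zero_iff_dvd, powerSum, Int.cast_sum]
  simp only [Int.cast_pow, Int.cast_natCast]
  rw [hsum]
  exact natCast_zmod_ne_zero (by omega) (by omega)

/-- The condition that no Voronoi sum `∑ (2i + 1) ^ r` over the odd numbers below `p`, with `r` odd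
and `r + 1` not divisible by `p - 1`, vanishes modulo `p`. By Voronoi's congruence this says that
`p` divides no numerator of `(2 ^ m - 1) * B_m / m` with `0 < m < p - 1` even. -/
def VoronoiSumsNeZero (p : ℕ) : Prop :=
  ∀ r < p - 1, Odd r → r + 1 ≠ p - 1 → ∑ i ∈ range ((p - 1) / 2), (2 * i + 1 : ZMod p) ^ r ≠ 0

theorem VoronoiSumsNeZero.not_dvd_oddPowerSum (hreg : VoronoiSumsNeZero p) (hp : p ≠ 2) {r : ℕ}
    (hr : Odd r) (hdvd : ¬ p - 1 ∣ r + 1) : ¬ (p : ℤ) ∣ oddPowerSum r ((p - 1) / 2) := by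
  have hlt : r % (p - 1) < p - 1 :=
    Nat.mod_lt _ (Nat.sub_pos_of_lt (Fact.out : p.Prime).one_lt)
  have hodd : Odd (r % (p - 1)) := by
    rwa [Nat.odd_iff, Nat.mod_mod_of_dvd _ ((Fact.out : p.Prime).even_sub_one hp).two_dvd,
      ← Nat.odd_iff]
  have hne : r % (p - 1) + 1 ≠ p - 1 := fun h => hdvd <| by
    rw [Nat.dvd_iff_mod_eq_zero, Nat.add_mod_eq_add_mod_right 1 (Nat.mod_mod r (p - 1)).symm, h,
      Nat.mod_self]
  have hne0 : ∀ i ∈ range ((p - 1) / 2), (2 * i + 1 : ZMod p) ≠ 0 := fun i hi =>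
    mod_cast natCast_zmod_ne_zero (2 * i).succ_pos (by have := mem_range.1 hi; omega)
  rw [← ZMod.intCast_zmod_eq_zero_iff_dvd, oddPowerSum]
  push_cast
  rw [sum_pow_eq_sum_pow_mod hne0]
  exact hreg _ hlt hodd hne

theorem VoronoiSumsNeZero.not_pow_dvd_powerSum_of_even (hreg : VoronoiSumsNeZero p) (hp : 5 ≤ p)
    {c m : ℕ} (hm : Even m) (hm0 : m ≠ 0) (hc : ¬ p ^ (c + 1) ∣ m) :
    ¬ (p : ℤ) ^ (c + 2) ∣ powerSum m (p - 1) := by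
  intro h
  obtain ⟨a, u, hu, hau⟩ := Nat.exists_eq_pow_mul_and_not_dvd hm0 p (Fact.out : p.Prime).ne_one
  have hac : a ≤ c := by
    by_contra! hca
    exact hc ((pow_dvd_pow p hca).trans (hau ▸ dvd_mul_right _ _))
  by_cases hdvd : p - 1 ∣ m
  · exact not_dvd_powerSum_of_dvd hdvd ((dvd_pow_self _ (by omega)).trans h)
  obtain ⟨n, rfl⟩ : ∃ n, m = n + 2 := ⟨m - 2, by grind⟩
  have hS : (p : ℤ) ^ (a + 2) ∣ (2 ^ (n + 2) - 1) * powerSum (n + 2) (p - 1) :=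
    ((pow_dvd_pow _ (by omega)).trans h).mul_left _
  rw [(two_pow_sub_one_mul_powerSum_modEq hp (hau ▸ dvd_mul_right _ _)).dvd_iff] at hS
  have hpO : (p : ℤ) ^ 2 ∣ p * oddPowerSum (n + 1) ((p - 1) / 2) :=
    pow_dvd_of_pow_add_dvd_pow_mul hu (by rw [← hau]; push_cast; rwa [← mul_assoc])
  have hp0 : (p : ℤ) ≠ 0 := mod_cast (Fact.out : p.Prime).ne_zero
  rw [sq, mul_dvd_mul_iff_left hp0] at hpO
  have hodd : Odd (n + 1) := by grind
  exact hreg.not_dvd_oddPowerSum (by omega) hodd hdvd hpO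

theorem VoronoiSumsNeZero.not_pow_dvd_powerSum_succ (hreg : VoronoiSumsNeZero p) (hp : 5 ≤ p)
    {c m : ℕ} (hm : Even m) (hm0 : m ≠ 0) (hc : ¬ p ^ (c + 1) ∣ (m + 1) * m) :
    ¬ (p : ℤ) ^ (c + 3) ∣ powerSum (m + 1) (p - 1) := by
  intro h
  have hp1 : p ≠ 1 := (Fact.out : p.Prime).ne_one
  obtain ⟨a, u, hu, hau⟩ := Nat.exists_eq_pow_mul_and_not_dvd m.add_one_ne_zero p hp1
  obtain ⟨b, v, hv, hbv⟩ := Nat.exists_eq_pow_mul_and_not_dvd hm0 p hp1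
  have hdvd : p ^ (a + b) ∣ (m + 1) * m := by
    rw [pow_add]
    exact mul_dvd_mul (hau ▸ dvd_mul_right _ _) (hbv ▸ dvd_mul_right _ _)
  have hab : a + b ≤ c := by
    by_contra! hca
    exact hc ((pow_dvd_pow p hca).trans hdvd)
  have hb : ¬ p ^ (b + 1) ∣ m := by
    rw [hbv, pow_succ, Nat.mul_dvd_mul_iff_left (pow_pos (Fact.out : p.Prime).pos b)]
    exact hv
  refine hreg.not_pow_dvd_powerSum_of_even hp hm hm0 hb ?_
  obtain ⟨n, rfl⟩ : ∃ n, m = n + 1 := ⟨m - 1, by omega⟩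
  have hS : (p : ℤ) ^ (a + b + 3) ∣ 2 * powerSum (n + 2) (p - 1) :=
    ((pow_dvd_pow _ (by omega)).trans h).mul_left _
  rw [(two_mul_powerSum_modEq hp (by grind) hdvd).dvd_iff] at hS
  have hpS : (p : ℤ) ^ (b + 3) ∣ p * powerSum (n + 1) (p - 1) :=
    pow_dvd_of_pow_add_dvd_pow_mul hu (by
      rw [← hau, ← add_assoc, ← mul_assoc]
      exact_mod_cast hS)
  have hp0 : (p : ℤ) ≠ 0 := mod_cast (Fact.out : p.Prime).ne_zero
  rwa [pow_succ', mul_dvd_mul_iff_left hp0] at hpS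

theorem VoronoiSumsNeZero.not_pow_dvd_powerSum_of_add_eq (hreg : VoronoiSumsNeZero p)
    (hp : 5 ≤ p) {s e : ℕ} (hs : 2 ≤ s) (hse : s ≤ e) (he : e + s = (p - 1) * p ^ (s - 1)) :
    ¬ (p : ℤ) ^ s ∣ powerSum e (p - 1) := by
  have not_dvd {x y t : ℕ} (hxy : x + y = e + s) (hy : 0 < y) (ht : t < s) (hyt : y < p ^ t) :
      ¬ p ^ t ∣ x := by
    intro hx
    have hsum : p ^ t ∣ x + y :=
      hxy ▸ he ▸ (pow_dvd_pow p (Nat.le_sub_one_of_lt ht)).mul_left (p - 1)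
    exact Nat.not_dvd_of_pos_of_lt hy hyt ((Nat.dvd_add_right hx).1 hsum)
  have heven : Even (e + s) := he ▸ ((Fact.out : p.Prime).even_sub_one (by omega)).mul_right _
  rcases Nat.even_or_odd' e with ⟨q, rfl | rfl⟩
  · obtain ⟨c, rfl⟩ : ∃ c, s = c + 2 := ⟨s - 2, by omega⟩
    have := one_add_mul_four_le_pow hp (c + 1)
    exact hreg.not_pow_dvd_powerSum_of_even hp (even_two_mul q) (by omega)
      (not_dvd rfl (by omega) (by omega) (by omega))
  · obtain ⟨c, rfl⟩ : ∃ c, s = c + 3 := ⟨s - 3, by grind⟩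
    have := one_add_mul_four_le_pow hp (c + 1)
    refine hreg.not_pow_dvd_powerSum_succ hp (even_two_mul q) (by omega) fun hc => ?_
    rcases (pow_dvd_succ_mul_self_iff (Nat.add_one_pos c)).1 hc with h | h
    · exact not_dvd rfl (by omega) (by omega) (by omega) h
    · exact not_dvd (y := c + 4) (by omega) (by omega) (by omega) (by omega) h

theorem VoronoiSumsNeZero.harmonicSum_prime_sub_one_notMem (hreg : VoronoiSumsNeZero p)
    (hp : 5 ≤ p) {s : ℕ} (hs : 2 ≤ s) : harmonicSum s (p - 1) ∉ padicIdeal p s := by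
  intro h
  have hle := add_le_sub_one_mul_pow (by omega : 3 ≤ p) (by omega : 0 < s) le_rfl
  obtain ⟨e, he⟩ := Nat.exists_eq_add_of_le' ((Nat.le_add_left s s).trans hle)
  refine hreg.not_pow_dvd_powerSum_of_add_eq hp hs (by omega : s ≤ e) he.symm ?_
  have happrox : restrictedHarmonicSum p s (p - 1) - powerSum e (p - 1) ∈ padicIdeal p s :=
    restrictedHarmonicSum_sub_powerSum_mem_padicIdeal he.dvd (by omega) (by omega) _
  rw [harmonicSum_eq_restrictedHarmonicSum (by omega : p - 1 < p)] at h
  have hmem := sub_mem h happrox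
  rwa [sub_sub_cancel, intCast_mem_padicIdeal] at hmem

end PowerSum

section TreeSearch

/-- The sum of `f` over `a, …, a + n - 1`, computed by `d` bisections; the kernel evaluates it in
recursion depth `d`. It is meaningful for `n ≤ 2 ^ d`. -/
def bisectSum (f : ℕ → ℕ) : ℕ → ℕ → ℕ → ℕ
  | 0, a, n => if n = 0 then 0 else f a
  | d + 1, a, n => bisectSum f d a (n / 2) + bisectSum f d (a + n / 2) (n - n / 2)

theorem bisectSum_eq_sum (f : ℕ → ℕ) {d n : ℕ} (hn : n ≤ 2 ^ d) (a : ℕ) :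
    bisectSum f d a n = ∑ k ∈ range n, f (a + k) := by
  induction d generalizing a n with
  | zero => interval_cases n <;> simp [bisectSum]
  | succ d ih =>
    rw [pow_succ] at hn
    rw [bisectSum, ih (by omega), ih (by omega)]
    simp only [add_assoc]
    rw [← sum_range_add (fun k => f (a + k)), Nat.add_sub_cancel' (Nat.div_le_self n 2)]

/-- The sum `f 0 + ⋯ + f (n - 1)` of a function of period `M`. -/
def periodicSum (f : ℕ → ℕ) (M n : ℕ) : ℕ :=
  if n < M then bisectSum f (n.log2 + 1) 0 n
  else n / M * bisectSum f (M.log2 + 1) 0 M + bisectSum f ((n % M).log2 + 1) 0 (n % M)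

theorem sum_range_mul_add_of_periodic {f : ℕ → ℕ} {M : ℕ} (hf : Function.Periodic f M) (q t : ℕ) :
    ∑ k ∈ range (M * q + t), f k = q * ∑ k ∈ range M, f k + ∑ k ∈ range t, f k := by
  induction q with
  | zero => simp
  | succ q ih =>
    rw [mul_add_one, add_right_comm, add_comm _ M, sum_range_add]
    simp only [add_comm M, hf _]
    rw [ih]
    ring

theorem periodicSum_eq_sum {f : ℕ → ℕ} {M : ℕ} (hf : Function.Periodic f M) (n : ℕ) :
    periodicSum f M n = ∑ k ∈ range n, f k := by
  have bisect (m : ℕ) : bisectSum f (m.log2 + 1) 0 m = ∑ k ∈ range m, f k := by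
    simpa only [zero_add] using bisectSum_eq_sum f Nat.lt_log2_self.le 0
  simp only [periodicSum, bisect]
  split_ifs
  · rfl
  · rw [← sum_range_mul_add_of_periodic hf, Nat.div_add_mod]

theorem periodicSum_modEq_powerSum (e M n : ℕ) :
    (periodicSum (fun k => (k + 1) ^ e % M) M n : ℤ) ≡ powerSum e n [ZMOD M] := by
  have hperiodic : Function.Periodic (fun k => (k + 1) ^ e % M) M := fun k =>
    Nat.ModEq.pow e (by simp [Nat.ModEq, add_right_comm k M 1])
  rw [periodicSum_eq_sum hperiodic, Nat.cast_sum, powerSum]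
  exact Int.ModEq.sum fun k _ => mod_cast Nat.mod_modEq ((k + 1) ^ e) M

/-- The `r`-th child of the node `x = (m, a)`, where `a` is a residue of `H(s; m)` modulo
`p ^ (K + s)`: the index `p * m + r` with a residue of its harmonic sum modulo `p ^ K`. -/
def childNode (p s K : ℕ) (x : ℕ × ℕ) (r : ℕ) : ℕ × ℕ :=
  let n := p * x.1 + r
  (n, (x.2 / p ^ s +
    periodicSum (fun k => (k + 1) ^ ((p - 1) * p ^ (K - 1) - s) % p ^ K) (p ^ K) n) % p ^ K)

/-- The children, with one more digit in base `p`, whose harmonic sums are divisible by `p ^ s`. -/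
def descend (p s K : ℕ) (L : List (ℕ × ℕ)) : List (ℕ × ℕ) :=
  L.flatMap fun x =>
    ((List.range p).map (childNode p s K x)).filter fun y => 0 < y.1 ∧ p ^ s ∣ y.2

/-- The list obtained from `L` after `j` levels of descent, the last at precision `p ^ s`. -/
def search (p s : ℕ) : ℕ → List (ℕ × ℕ) → List (ℕ × ℕ)
  | 0, L => L
  | j + 1, L => search p s j (descend p s (s * (j + 1)) L)

variable {p s d K : ℕ} [Fact p.Prime] {L : List (ℕ × ℕ)}

/-- The list `L` contains all `n` with `d` digits in base `p` for which `p ^ s` divides `H(s; n)`,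
each paired with a residue of `H(s; n)` modulo `p ^ K`. -/
def IsLevelComplete (p s d K : ℕ) [Fact p.Prime] (L : List (ℕ × ℕ)) : Prop :=
  ∀ n, (p.digits n).length = d → harmonicSum s n ∈ padicIdeal p s →
    ∃ a : ℕ, (n, a) ∈ L ∧ harmonicSum s n - a ∈ padicIdeal p K

theorem isLevelComplete_zero : IsLevelComplete p s 0 K [(0, 0)] := by
  intro n hn _
  obtain rfl : n = 0 := by simpa [Nat.digits_eq_nil_iff_eq_zero] using hn
  exact ⟨0, by simp, by simp [harmonicSum]⟩

theorem mem_padicIdeal_iff_of_sub_natCast_mem {x : ℚ} {a M : ℕ} (h : x - a ∈ padicIdeal p K)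
    (hMK : M ≤ K) : x ∈ padicIdeal p M ↔ p ^ M ∣ a := by
  rw [← natCast_mem_padicIdeal, ← sub_add_cancel x a,
    add_mem_cancel_left (padicIdeal_antitone hMK h)]

theorem childNode_snd_modEq {e : ℕ} (he : (p - 1) * p ^ (K - 1) = e + s) (m c r : ℕ) :
    ((childNode p s K (m, p ^ s * c) r).2 : ℤ) ≡ c + powerSum e (p * m + r)
      [ZMOD (p : ℤ) ^ K] := by
  have hc : p ^ s * c / p ^ s = c := Nat.mul_div_cancel_left c (pow_pos (Fact.out : p.Prime).pos s)
  have hsum := periodicSum_modEq_powerSum e (p ^ K) (p * m + r)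
  rw [childNode, he, Nat.add_sub_cancel, hc]
  rw [Nat.cast_pow] at hsum
  push_cast
  exact (Int.mod_modEq _ _).trans (hsum.add_left c)

theorem harmonicSum_sub_childNode_mem_padicIdeal (hp : 3 ≤ p) (hs : 0 < s) (hsK : s ≤ K)
    {m a r : ℕ} (hr : r < p) (hdvd : p ^ s ∣ a)
    (ha : harmonicSum s m - a ∈ padicIdeal p (K + s)) :
    harmonicSum s (p * m + r) - (childNode p s K (m, a) r).2 ∈ padicIdeal p K := by
  have hle := add_le_sub_one_mul_pow hp hs hsK
  obtain ⟨e, he⟩ := Nat.exists_eq_add_of_le' ((Nat.le_add_left s K).trans hle)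
  obtain ⟨c, rfl⟩ := hdvd
  have hp0 : 0 < p := by omega
  have hps : (p : ℚ) ^ s ≠ 0 := pow_ne_zero s (mod_cast hp0.ne')
  have hparent : harmonicSum s m / (p : ℚ) ^ s - c ∈ padicIdeal p K := by
    rw [← div_pow_mem_padicIdeal, Nat.cast_mul, Nat.cast_pow, sub_div,
      mul_div_cancel_left₀ _ hps] at ha
    exact ha
  have hnew := restrictedHarmonicSum_sub_powerSum_mem_padicIdeal (p := p) he.dvd (by omega)
    (by omega : K ≤ e) (p * m + r)
  have hres := intCast_mem_padicIdeal.2 (childNode_snd_modEq he m c r).dvd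
  have hdiv : (p * m + r) / p = m := by
    rw [Nat.mul_add_div hp0, Nat.div_eq_of_lt hr, add_zero]
  rw [harmonicSum_eq_div_add hp0, hdiv]
  convert add_mem (add_mem hparent hnew) hres using 1
  push_cast
  ring

theorem IsLevelComplete.descend (h : IsLevelComplete p s d (K + s) L) (hp : 3 ≤ p) (hs : 0 < s)
    (hsK : s ≤ K) : IsLevelComplete p s (d + 1) K (descend p s K L) := by
  intro n hn hmem
  have hn0 : 0 < n := by
    rw [Nat.pos_iff_ne_zero]
    rintro rfl
    simp at hn
  have hdiv := harmonicSum_div_mem_padicIdeal (padicIdeal_antitone s.zero_le hmem)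
  rw [Nat.digits_def' (by omega) hn0, List.length_cons, Nat.add_right_cancel_iff] at hn
  obtain ⟨a, haL, ha⟩ := h (n / p) hn hdiv
  have hdvd : p ^ s ∣ a := (mem_padicIdeal_iff_of_sub_natCast_mem ha (by omega)).1 hdiv
  have hr : n % p < p := Nat.mod_lt n (by omega)
  have hchild := harmonicSum_sub_childNode_mem_padicIdeal hp hs hsK hr hdvd ha
  have hfst : (childNode p s K (n / p, a) (n % p)).1 = n := Nat.div_add_mod n p
  rw [Nat.div_add_mod] at hchild
  have hdvd' := (mem_padicIdeal_iff_of_sub_natCast_mem hchild hsK).1 hmem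
  refine ⟨_, List.mem_flatMap.2 ⟨_, haL, List.mem_filter.2 ⟨List.mem_map.2
    ⟨n % p, List.mem_range.2 hr, Prod.ext hfst rfl⟩, ?_⟩⟩, hchild⟩
  exact decide_eq_true ⟨hn0, hdvd'⟩

theorem IsLevelComplete.search {j : ℕ} (h : IsLevelComplete p s d (s * j + s) L)
    (hp : 3 ≤ p) (hs : 0 < s) :
    IsLevelComplete p s (d + j) s (search p s j L) := by
  induction j generalizing d L with
  | zero => simpa [search] using h
  | succ j ih =>
    have hstep := h.descend hp hs (Nat.le_mul_of_pos_right s j.succ_pos)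
    rw [show d + (j + 1) = d + 1 + j by omega]
    exact ih hstep

theorem finite_divisibleSet_of_search_eq_nil (hp : 3 ≤ p) (hs : 0 < s) (j : ℕ)
    (h : search p s j [(0, 0)] = []) : (divisibleSet p s).Finite := by
  refine finite_divisibleSet_of_forall_length_digits_eq (0 + j) fun n hn hmem => ?_
  obtain ⟨a, ha, -⟩ := isLevelComplete_zero.search hp hs n hn hmem
  simp [h] at ha

end TreeSearch

section SmallIndices

variable {p s n : ℕ} [Fact p.Prime]

theorem pow_dvd_sum_div_pow_of_harmonicSum_mem {N : ℕ} (hN : ∀ k < n, k + 1 ∣ N)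
    (h : harmonicSum s n ∈ padicIdeal p s) : p ^ s ∣ ∑ k ∈ range n, (N / (k + 1)) ^ s := by
  have hscale : harmonicSum s n * (N ^ s : ℕ) = (∑ k ∈ range n, (N / (k + 1)) ^ s : ℕ) := by
    rw [harmonicSum, sum_mul, Nat.cast_sum]
    refine sum_congr rfl fun k hk => ?_
    have hk0 : ((k + 1 : ℕ) : ℚ) ≠ 0 := by positivity
    rw [Nat.cast_pow, Nat.cast_pow, Nat.cast_div (hN k (mem_range.1 hk)) hk0, div_pow,
      div_eq_inv_mul]
  rw [← natCast_mem_padicIdeal, ← hscale]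
  exact mul_mem_padicIdeal h (natCast_mem_padicIdeal.2 (by simp))

theorem harmonicSum_two_notMem_padicIdeal (hp : 3 ≤ p) (hs : 2 ≤ s) :
    harmonicSum s 2 ∉ padicIdeal p s := by
  intro h
  have hdvd := pow_dvd_sum_div_pow_of_harmonicSum_mem (N := 2) (by decide) h
  have hlt : 2 ^ s + 1 < 3 ^ s := by
    clear h hdvd
    induction s, hs using Nat.le_induction with
    | base => norm_num
    | succ s _ ih =>
      simp only [pow_succ]
      omega
  refine Nat.not_dvd_of_pos_of_lt (by simp [sum_range_succ]) ?_ hdvd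
  simpa [sum_range_succ] using hlt.trans_le (Nat.pow_le_pow_left hp s)

theorem harmonicSum_three_notMem_padicIdeal (hp : 7 ≤ p) (hs : 3 ≤ s) :
    harmonicSum s 3 ∉ padicIdeal p s := by
  intro h
  have hdvd := pow_dvd_sum_div_pow_of_harmonicSum_mem (N := 6) (by decide) h
  have hlt : 6 ^ s + 3 ^ s + 2 ^ s < 7 ^ s := by
    clear h hdvd
    induction s, hs using Nat.le_induction with
    | base => norm_num
    | succ s _ ih =>
      simp only [pow_succ]
      omega
  refine Nat.not_dvd_of_pos_of_lt (by simp [sum_range_succ]) ?_ hdvd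
  simpa [sum_range_succ] using hlt.trans_le (Nat.pow_le_pow_left hp s)

theorem harmonicSum_notMem_padicIdeal_of_powerSum_ne_zero (hs : 0 < s) (hn : n < p)
    (h : ∀ r < p - 1, ∑ k ∈ range n, ((k + 1 : ℕ) : ZMod p) ^ r ≠ 0) :
    harmonicSum s n ∉ padicIdeal p s := by
  intro hmem
  have hp : 0 < p - 1 := Nat.sub_pos_of_lt (Fact.out : p.Prime).one_lt
  obtain ⟨e, he⟩ : ∃ e, (p - 1) * (2 * s) = e + s :=
    Nat.exists_eq_add_of_le' (by nlinarith)
  have happrox : restrictedHarmonicSum p s n - powerSum e n ∈ padicIdeal p 1 :=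
    restrictedHarmonicSum_sub_powerSum_mem_padicIdeal (by simp [← he]) one_pos (by nlinarith) n
  rw [harmonicSum_eq_restrictedHarmonicSum hn] at hmem
  have hdvd := sub_mem (padicIdeal_antitone hs hmem) happrox
  rw [sub_sub_cancel, intCast_mem_padicIdeal, pow_one, ← ZMod.intCast_zmod_eq_zero_iff_dvd,
    powerSum] at hdvd
  have hne : ∀ k ∈ range n, ((k + 1 : ℕ) : ZMod p) ≠ 0 := fun k hk =>
    natCast_zmod_ne_zero k.succ_pos (by have := mem_range.1 hk; omega)
  refine h (e % (p - 1)) (Nat.mod_lt e hp) ?_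
  rw [← sum_pow_eq_sum_pow_mod hne]
  exact_mod_cast hdvd

end SmallIndices

section SmallPrimes

instance fact_prime_five : Fact (Nat.Prime 5) := ⟨by norm_num⟩

instance fact_prime_seven : Fact (Nat.Prime 7) := ⟨by norm_num⟩

theorem voronoiSumsNeZero_five : VoronoiSumsNeZero 5 := by
  unfold VoronoiSumsNeZero
  decide

theorem voronoiSumsNeZero_seven : VoronoiSumsNeZero 7 := by
  unfold VoronoiSumsNeZero
  decide

variable {s : ℕ}

theorem finite_divisibleSet_two (hs : 0 < s) : (divisibleSet 2 s).Finite := by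
  refine finite_divisibleSet_of_forall_lt_prime fun n hn0 hn => ?_
  exact harmonicSum_notMem_padicIdeal_of_powerSum_ne_zero hs hn (by interval_cases n; decide)

theorem finite_divisibleSet_three (hs : 0 < s) : (divisibleSet 3 s).Finite := by
  rcases (Nat.succ_le_of_lt hs).eq_or_lt with rfl | hs2
  · exact finite_divisibleSet_of_search_eq_nil le_rfl hs 4 (by decide +kernel)
  refine finite_divisibleSet_of_forall_lt_prime fun n hn0 hn => ?_
  interval_cases n
  · exact harmonicSum_notMem_padicIdeal_of_powerSum_ne_zero hs (by omega) (by decide)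
  · exact harmonicSum_two_notMem_padicIdeal le_rfl hs2

theorem finite_divisibleSet_five (hs : 0 < s) : (divisibleSet 5 s).Finite := by
  rcases (Nat.succ_le_of_lt hs).eq_or_lt with rfl | hs2
  · exact finite_divisibleSet_of_search_eq_nil (by omega) hs 3 (by decide +kernel)
  refine finite_divisibleSet_of_forall_lt_prime fun n hn0 hn => ?_
  have hmod := harmonicSum_notMem_padicIdeal_of_powerSum_ne_zero (n := n) hs hn
  interval_cases n
  · exact hmod (by decide)
  · exact harmonicSum_two_notMem_padicIdeal (by omega) hs2
  · exact hmod (by decide)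
  · exact voronoiSumsNeZero_five.harmonicSum_prime_sub_one_notMem le_rfl hs2

theorem finite_divisibleSet_seven (hs : 0 < s) : (divisibleSet 7 s).Finite := by
  obtain rfl | rfl | hs3 : s = 1 ∨ s = 2 ∨ 3 ≤ s := by omega
  · exact finite_divisibleSet_of_search_eq_nil (by omega) hs 7 (by decide +kernel)
  · exact finite_divisibleSet_of_search_eq_nil (by omega) hs 2 (by decide +kernel)
  refine finite_divisibleSet_of_forall_lt_prime fun n hn0 hn => ?_
  have hmod := harmonicSum_notMem_padicIdeal_of_powerSum_ne_zero (n := n) hs hn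
  interval_cases n
  · exact hmod (by decide)
  · exact hmod (by decide)
  · exact harmonicSum_three_notMem_padicIdeal le_rfl hs3
  · exact hmod (by decide)
  · exact hmod (by decide)
  · exact voronoiSumsNeZero_seven.harmonicSum_prime_sub_one_notMem (by omega) (by omega)

end SmallPrimes

/-- For `p ∈ {2,3,5,7}` the `p`-divisible set `J(s|p)` of the harmonic-like series
`H(s;·)` is finite. -/
theorem stmt11 (s p : ℕ) (hs : 0 < s) (hp : p = 2 ∨ p = 3 ∨ p = 5 ∨ p = 7) :
    {n : ℕ | (p : ℤ) ∣ (mhs [s] n).num}.Finite := by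
  rcases hp with rfl | rfl | rfl | rfl
  · exact finite_divisibleSet_two hs
  · exact finite_divisibleSet_three hs
  · exact finite_divisibleSet_five hs
  · exact finite_divisibleSet_seven hs
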